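/- arXiv:2403.09902 — 2 statements merged into one kernel-verified Lean document; each statement's English description precedes it below -/
import Mathlib

section
/- Let n ≥ 2 and let Φ be a C²-anisotropy on ℝⁿ. Then Φ is elliptic if and only if for every pair of distinct points x, y ∈ ℝⁿ such that the line {x + t(y − x) : t ∈ ℝ} does not pass through the origin, the function h(t) := Φ(x + t(y − x)) is twice differentiable on [0,1] with h''(t) > 0 for every t ∈ [0,1]. (Proposition A.2, equivalence (a) ⇔ (e).) -/
/-- An anisotropy on ℝⁿ: a convex, even, positively one-homogeneous function with
linear upper and lower bounds. -/
def IsAnisotropy {n : ℕ} (Φ : EuclideanSpace ℝ (Fin n) → ℝ) : Prop :=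
  ConvexOn ℝ Set.univ Φ ∧ (∀ x, Φ (-x) = Φ x) ∧
    (∀ c : ℝ, 0 < c → ∀ x, Φ (c • x) = c * Φ x) ∧
    ∃ cl cu : ℝ, 0 < cl ∧ cl ≤ cu ∧ ∀ x, cl * ‖x‖ ≤ Φ x ∧ Φ x ≤ cu * ‖x‖

/-- A `C^k`-anisotropy: an anisotropy that is `k` times continuously differentiable
away from the origin. -/
def IsCAnisotropy {n : ℕ} (k : ℕ) (Φ : EuclideanSpace ℝ (Fin n) → ℝ) : Prop :=
  IsAnisotropy Φ ∧ ContDiffOn ℝ k Φ {(0 : EuclideanSpace ℝ (Fin n))}ᶜ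

/-- An anisotropy is elliptic if `Φ - γ‖·‖` is convex for some `γ > 0`. -/
def IsElliptic {n : ℕ} (Φ : EuclideanSpace ℝ (Fin n) → ℝ) : Prop :=
  ∃ γ : ℝ, 0 < γ ∧ ConvexOn ℝ Set.univ (fun x => Φ x - γ * ‖x‖)

/-- The second derivative of `Φ` at `x`, as a bilinear form evaluated at `(y, z)`. -/
noncomputable def D2 {n : ℕ} (Φ : EuclideanSpace ℝ (Fin n) → ℝ)
    (x y z : EuclideanSpace ℝ (Fin n)) : ℝ :=
  fderiv ℝ (fun w => fderiv ℝ Φ w) x y z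


namespace AnisoAux

/-- Auxiliary class of functions: `C²` off the origin, positively one-homogeneous. -/
def Good {n : ℕ} (F : EuclideanSpace ℝ (Fin n) → ℝ) : Prop :=
  (∀ p, p ≠ 0 → ContDiffAt ℝ 2 F p) ∧ (∀ c : ℝ, 0 < c → ∀ x, F (c • x) = c * F x)

variable {n : ℕ} {F : EuclideanSpace ℝ (Fin n) → ℝ}

lemma Good.hasF (hF : Good F) {p : EuclideanSpace ℝ (Fin n)} (hp : p ≠ 0) :
    HasFDerivAt F (fderiv ℝ F p) p :=
  ((hF.1 p hp).differentiableAt (by norm_num)).hasFDerivAt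

lemma Good.cd1 (hF : Good F) {p : EuclideanSpace ℝ (Fin n)} (hp : p ≠ 0) :
    ContDiffAt ℝ 1 (fderiv ℝ F) p :=
  (hF.1 p hp).fderiv_right (by norm_num)

lemma Good.hasF2 (hF : Good F) {p : EuclideanSpace ℝ (Fin n)} (hp : p ≠ 0) :
    HasFDerivAt (fderiv ℝ F) (fderiv ℝ (fderiv ℝ F) p) p :=
  ((hF.cd1 hp).differentiableAt (by norm_num)).hasFDerivAt

lemma hasLine (x v : EuclideanSpace ℝ (Fin n)) (t : ℝ) :
    HasDerivAt (fun s : ℝ => x + s • v) v t := by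
  simpa using ((hasDerivAt_id t).smul_const v).const_add x

lemma Good.line1 (hF : Good F) {x v : EuclideanSpace ℝ (Fin n)} {t : ℝ} (h : x + t • v ≠ 0) :
    HasDerivAt (fun s : ℝ => F (x + s • v)) (fderiv ℝ F (x + t • v) v) t :=
  (hF.hasF h).comp_hasDerivAt t (hasLine x v t)

lemma Good.line2 (hF : Good F) {x v : EuclideanSpace ℝ (Fin n)} (h : ∀ t : ℝ, x + t • v ≠ 0)
    (t : ℝ) :
    HasDerivAt (deriv fun s : ℝ => F (x + s • v)) (D2 F (x + t • v) v v) t := by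
  have e : (deriv fun s : ℝ => F (x + s • v)) = fun s => fderiv ℝ F (x + s • v) v := by
    funext s
    exact (hF.line1 (h s)).deriv
  rw [e]
  have h1 : HasDerivAt (fun s : ℝ => fderiv ℝ F (x + s • v))
      (fderiv ℝ (fderiv ℝ F) (x + t • v) v) t :=
    (hF.hasF2 (h t)).comp_hasDerivAt t (hasLine x v t)
  have h2 := h1.clm_apply (hasDerivAt_const t v)
  rw [map_zero, add_zero] at h2
  exact h2

lemma Good.fderiv_smul (hF : Good F) {c : ℝ} (hc : 0 < c) (p : EuclideanSpace ℝ (Fin n)) :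
    fderiv ℝ F (c • p) = fderiv ℝ F p := by
  have h1 : fderiv ℝ (fun x => F (c • x)) p = c • fderiv ℝ F (c • p) := fderiv_comp_smul (f := F) c
  have h2 : (fun x => F (c • x)) = c • F := by
    funext x; simp [hF.2 c hc x]
  rw [h2, fderiv_const_smul_field] at h1
  exact (smul_right_injective _ hc.ne' h1).symm

lemma Good.D2_smul (hF : Good F) {c : ℝ} (hc : 0 < c) (p v w : EuclideanSpace ℝ (Fin n)) :
    D2 F p v w = c * D2 F (c • p) v w := by
  have h1 : fderiv ℝ (fun x => fderiv ℝ F (c • x)) p = c • fderiv ℝ (fderiv ℝ F) (c • p) :=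
    fderiv_comp_smul (f := fderiv ℝ F) c
  have h2 : (fun x => fderiv ℝ F (c • x)) = fderiv ℝ F := by
    funext x; exact hF.fderiv_smul hc x
  rw [h2] at h1
  simp only [D2]
  rw [h1]
  simp

lemma Good.D2_self (hF : Good F) {p : EuclideanSpace ℝ (Fin n)} (hp : p ≠ 0)
    (w : EuclideanSpace ℝ (Fin n)) : D2 F p p w = 0 := by
  have h1 : HasDerivAt (fun s : ℝ => fderiv ℝ F (0 + s • p)) (fderiv ℝ (fderiv ℝ F) p p) 1 := by
    have hp1 : (0 + (1:ℝ) • p) = p := by simp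
    have h0 : HasFDerivAt (fderiv ℝ F) (fderiv ℝ (fderiv ℝ F) p) (0 + (1:ℝ) • p) := by
      rw [hp1]; exact hF.hasF2 hp
    exact h0.comp_hasDerivAt 1 (hasLine 0 p 1)
  have h2 : (fun s : ℝ => fderiv ℝ F (0 + s • p)) =ᶠ[nhds 1] fun _ => fderiv ℝ F p := by
    filter_upwards [lt_mem_nhds (show (0:ℝ) < 1 by norm_num)] with s hs
    simpa using hF.fderiv_smul hs p
  have h3 := h1.unique ((hasDerivAt_const (1:ℝ) (fderiv ℝ F p)).congr_of_eventuallyEq h2)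
  simp [D2, h3]

lemma Good.D2_symm (hF : Good F) {p : EuclideanSpace ℝ (Fin n)} (hp : p ≠ 0)
    (v w : EuclideanSpace ℝ (Fin n)) : D2 F p v w = D2 F p w v :=
  ((hF.1 p hp).isSymmSndFDerivAt (by simp)) v w

lemma red {p v : EuclideanSpace ℝ (Fin n)} (hp : p ≠ 0) (hv : ∀ a : ℝ, v ≠ a • p) :
    ∃ c : ℝ, 0 < c ∧ ∃ u e : EuclideanSpace ℝ (Fin n), ‖u‖ = 1 ∧ ‖e‖ = 1 ∧ inner ℝ u e = 0 ∧
      ∀ F : EuclideanSpace ℝ (Fin n) → ℝ, Good F → D2 F p v v = c * D2 F u e e := by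
  have hp' : 0 < ‖p‖ := norm_pos_iff.2 hp
  obtain ⟨a, ha⟩ : ∃ a : ℝ, a = inner ℝ p v / ‖p‖ ^ 2 := ⟨_, rfl⟩
  obtain ⟨w, hw⟩ : ∃ w, w = v - a • p := ⟨_, rfl⟩
  have hw0 : w ≠ 0 := by
    rw [hw]; exact sub_ne_zero.2 (hv a)
  have hw' : 0 < ‖w‖ := norm_pos_iff.2 hw0
  have hpw : inner ℝ p w = 0 := by
    rw [hw, inner_sub_right, inner_smul_right, real_inner_self_eq_norm_sq, ha]
    field_simp
    ring
  refine ⟨‖w‖ ^ 2 / ‖p‖, by positivity, ‖p‖⁻¹ • p, ‖w‖⁻¹ • w, ?_, ?_, ?_, ?_⟩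
  · rw [norm_smul]; simp [hp'.ne']
  · rw [norm_smul]; simp [hw'.ne']
  · rw [inner_smul_left, inner_smul_right, hpw]; simp
  · intro F hF
    have h1 : D2 F p v v = D2 F p w w := by
      have hvw : v = w + a • p := by rw [hw]; abel
      have e1 : D2 F p p w = 0 := hF.D2_self hp w
      have e2 : D2 F p p p = 0 := hF.D2_self hp p
      have e3 : D2 F p w p = 0 := by rw [hF.D2_symm hp]; exact e1
      rw [hvw]
      simp only [D2] at e1 e2 e3 ⊢
      simp [e1, e2, e3]
    have h2 := hF.D2_smul (inv_pos.2 hp') p w w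
    have h3 : D2 F (‖p‖⁻¹ • p) (‖w‖⁻¹ • w) (‖w‖⁻¹ • w)
        = ‖w‖⁻¹ * (‖w‖⁻¹ * D2 F (‖p‖⁻¹ • p) w w) := by
      simp [D2]
    rw [h1, h2, h3]
    field_simp

lemma good_norm : Good (fun x : EuclideanSpace ℝ (Fin n) => ‖x‖) :=
  ⟨fun _ hp => contDiffAt_norm ℝ hp, fun c hc x => by simp [norm_smul, abs_of_pos hc]⟩

lemma line_ne {u e : EuclideanSpace ℝ (Fin n)} (hu : ‖u‖ = 1) (hue : inner ℝ u e = 0) (t : ℝ) :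
    u + t • e ≠ 0 := by
  intro h
  have : inner ℝ u (u + t • e) = (0:ℝ) := by rw [h]; simp
  rw [inner_add_right, inner_smul_right, hue, real_inner_self_eq_norm_sq, hu] at this
  norm_num at this

lemma D2_norm {u e : EuclideanSpace ℝ (Fin n)} (hu : ‖u‖ = 1) (he : ‖e‖ = 1)
    (hue : inner ℝ u e = 0) : D2 (fun x : EuclideanSpace ℝ (Fin n) => ‖x‖) u e e = 1 := by
  have h1 := (good_norm (n := n)).line2 (x := u) (v := e) (line_ne hu hue) 0
  have e1 : (fun s : ℝ => ‖u + s • e‖) = fun s => Real.sqrt (1 + s ^ 2) := by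
    funext s
    rw [eq_comm, Real.sqrt_eq_iff_mul_self_eq (by positivity) (norm_nonneg _), ← pow_two,
      norm_add_sq_real, inner_smul_right, hue, norm_smul, hu, he]
    simp
  have e2 : deriv (fun s : ℝ => Real.sqrt (1 + s ^ 2)) = fun s => s / Real.sqrt (1 + s ^ 2) := by
    funext s
    have : HasDerivAt (fun s : ℝ => 1 + s ^ 2) (2 * s) s := by
      simpa using (hasDerivAt_pow 2 s).const_add 1
    rw [(this.sqrt (by positivity)).deriv]
    have : 0 < Real.sqrt (1 + s ^ 2) := by positivity
    field_simp
  have h2 : HasDerivAt (fun s : ℝ => s / Real.sqrt (1 + s ^ 2)) 1 0 := by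
    have : HasDerivAt (fun s : ℝ => 1 + s ^ 2) (2 * 0) 0 := by
      simpa using (hasDerivAt_pow 2 (0:ℝ)).const_add 1
    have h3 := (hasDerivAt_id (0:ℝ)).div (this.sqrt (by norm_num)) (by norm_num)
    refine HasDerivAt.congr_deriv h3 ?_
    simp
  rw [e1, e2] at h1
  simpa using h1.unique h2

lemma Good.sub {γ : ℝ} (hF : Good F) : Good (fun x => F x - γ * ‖x‖) := by
  refine ⟨fun p hp => (hF.1 p hp).sub (contDiffAt_const.mul (good_norm.1 p hp)), ?_⟩
  intro c hc x
  have := good_norm.2 c hc x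
  simp only at this
  simp only [hF.2 c hc x, this]
  ring

lemma Good.D2_sub {γ : ℝ} (hF : Good F) {p : EuclideanSpace ℝ (Fin n)} (hp : p ≠ 0)
    (v w : EuclideanSpace ℝ (Fin n)) :
    D2 (fun x => F x - γ * ‖x‖) p v w
      = D2 F p v w - γ * D2 (fun x : EuclideanSpace ℝ (Fin n) => ‖x‖) p v w := by
  have hev : fderiv ℝ (fun x => F x - γ * ‖x‖) =ᶠ[nhds p]
      fun q => fderiv ℝ F q - γ • fderiv ℝ (fun x : EuclideanSpace ℝ (Fin n) => ‖x‖) q := by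
    filter_upwards [isOpen_ne.mem_nhds hp] with q hq
    exact ((hF.hasF hq).sub ((good_norm.hasF hq).const_mul γ)).fderiv
  have h := (((hF.hasF2 hp).sub ((good_norm.hasF2 hp).const_smul γ)).congr_of_eventuallyEq
    hev).fderiv
  simp only [D2]
  rw [h]
  simp

lemma indep {x v : EuclideanSpace ℝ (Fin n)} (hv : v ≠ 0) (h : ∀ t : ℝ, x + t • v ≠ 0) (t : ℝ)
    (a : ℝ) : v ≠ a • (x + t • v) := by
  intro e
  have ha : a ≠ 0 := by
    rintro rfl
    exact hv (by simpa using e)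
  apply h (t - a⁻¹)
  have : a⁻¹ • v = x + t • v := by
    conv_lhs => rw [e]
    rw [smul_smul, inv_mul_cancel₀ ha, one_smul]
  rw [sub_smul, this]
  abel

lemma comb (x y : EuclideanSpace ℝ (Fin n)) {a b : ℝ} (hab : a + b = 1) :
    a • x + b • y = x + b • (y - x) := by
  obtain rfl : a = 1 - b := by linarith
  rw [sub_smul, smul_sub, one_smul]; abel

lemma Good.forward (hF : Good F) {γ : ℝ} (hγ : 0 < γ)
    (hc : ConvexOn ℝ Set.univ (fun x => F x - γ * ‖x‖))
    {x v : EuclideanSpace ℝ (Fin n)} (hv : v ≠ 0) (h : ∀ t : ℝ, x + t • v ≠ 0) (t : ℝ) :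
    0 < D2 F (x + t • v) v v := by
  have hG : Good (fun x => F x - γ * ‖x‖) := hF.sub
  have hconv : ConvexOn ℝ Set.univ
      (fun s : ℝ => (fun x => F x - γ * ‖x‖) (x + s • v)) := by
    refine ⟨convex_univ, fun s _ r _ a b ha hb hab => ?_⟩
    have := hc.2 (Set.mem_univ (x + s • v)) (Set.mem_univ (x + r • v)) ha hb hab
    have e : a • (x + s • v) + b • (x + r • v) = x + (a • s + b • r) • v := by
      obtain rfl : a = 1 - b := by linarith
      simp only [smul_eq_mul]
      module
    rw [e] at this
    exact this
  have hm := hconv.monotoneOn_deriv (fun s _ => (hG.line1 (h s)).differentiableAt)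
  have h0 : 0 ≤ D2 (fun x => F x - γ * ‖x‖) (x + t • v) v v := by
    rw [← (hG.line2 h t).deriv]
    exact (monotoneOn_univ.1 hm).deriv_nonneg
  rw [hF.D2_sub (h t)] at h0
  obtain ⟨c, hc0, u, e, hu, he, hue, hr⟩ := red (h t) (indep hv h t)
  have h1 := hr _ good_norm
  rw [D2_norm hu he hue] at h1
  rw [h1] at h0
  have : 0 < γ * (c * 1) := by positivity
  linarith

lemma Good.backward (hF : Good F) {γ : ℝ} (heven : ∀ x, F (-x) = F x)
    (hlow : ∀ x, γ * ‖x‖ ≤ F x)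
    (hpos : ∀ u e : EuclideanSpace ℝ (Fin n), ‖u‖ = 1 → ‖e‖ = 1 → inner ℝ u e = 0 →
      γ ≤ D2 F u e e) :
    ConvexOn ℝ Set.univ (fun x => F x - γ * ‖x‖) := by
  have hG : Good (fun x => F x - γ * ‖x‖) := hF.sub
  have hGe : ∀ x, (fun x => F x - γ * ‖x‖) (-x) = (fun x => F x - γ * ‖x‖) x := by
    intro x; simp [heven]
  have hG0 : ∀ x, 0 ≤ (fun x => F x - γ * ‖x‖) x := by
    intro x; have := hlow x; simp only; linarith
  have hGp : ∀ u e : EuclideanSpace ℝ (Fin n), ‖u‖ = 1 → ‖e‖ = 1 → inner ℝ u e = 0 →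
      0 ≤ D2 (fun x => F x - γ * ‖x‖) u e e := by
    intro u e hu he hue
    have hu0 : u ≠ 0 := by rintro rfl; simp at hu
    rw [hF.D2_sub hu0, D2_norm hu he hue]
    have := hpos u e hu he hue
    linarith
  generalize (fun x => F x - γ * ‖x‖) = G at *
  have hz : G 0 = 0 := by
    have := hG.2 2 (by norm_num) 0
    rw [smul_zero] at this
    linarith
  have habs : ∀ (s : ℝ) x, G (s • x) = |s| * G x := by
    intro s x
    rcases lt_trichotomy s 0 with hs | hs | hs
    · rw [← hGe, ← neg_smul, hG.2 (-s) (by linarith), abs_of_neg hs]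
    · subst hs; simp [hz]
    · rw [hG.2 s hs, abs_of_pos hs]
  refine ⟨convex_univ, fun x _ y _ a b ha hb hab => ?_⟩
  rw [comb x y hab]
  by_cases hv : y - x = 0
  · have : y = x := sub_eq_zero.1 hv
    subst this
    have : a • G y + b • G y = G y := by rw [← add_smul, hab, one_smul]
    rw [this]
    simp
  by_cases h : ∀ t : ℝ, x + t • (y - x) ≠ 0
  · have hconv : ConvexOn ℝ Set.univ (fun s : ℝ => G (x + s • (y - x))) := by
      apply convexOn_univ_of_deriv2_nonneg
      · exact fun s => (hG.line1 (h s)).differentiableAt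
      · exact fun s => (hG.line2 h s).differentiableAt
      · intro s
        simp only [Function.iterate_succ, Function.iterate_zero, Function.comp, id]
        rw [(hG.line2 h s).deriv]
        obtain ⟨c, hc0, u, e, hu, he, hue, hr⟩ := red (h s) (indep hv h s)
        rw [hr _ hG]
        exact mul_nonneg hc0.le (hGp u e hu he hue)
    have := hconv.2 (Set.mem_univ 0) (Set.mem_univ 1) ha hb hab
    simpa using this
  · push Not at h
    obtain ⟨t, ht⟩ := h
    generalize hvv : y - x = v at *
    have hx : x = (-t) • v := by rw [neg_smul]; exact eq_neg_of_add_eq_zero_left ht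
    have hy : y = (1 - t) • v := by
      have : y = x + v := by rw [← hvv]; abel
      rw [this, hx]; module
    have e : x + b • v = (b - t) • v := by rw [hx]; module
    rw [e, hx, hy, habs, habs, habs]
    simp only [smul_eq_mul]
    have h1 : |b - t| ≤ a * |-t| + b * |1 - t| := by
      have : b - t = a * (-t) + b * (1 - t) := by
        obtain rfl : a = 1 - b := by linarith
        ring
      rw [this]
      refine (abs_add_le _ _).trans ?_
      rw [abs_mul, abs_mul, abs_of_nonneg ha, abs_of_nonneg hb]
    have := mul_le_mul_of_nonneg_right h1 (hG0 v)
    linarith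

lemma Good.exists_min (hF : Good F)
    (hpos : ∀ u e : EuclideanSpace ℝ (Fin n), ‖u‖ = 1 → ‖e‖ = 1 → inner ℝ u e = 0 →
      0 < D2 F u e e) :
    ∃ γ : ℝ, 0 < γ ∧ ∀ u e : EuclideanSpace ℝ (Fin n), ‖u‖ = 1 → ‖e‖ = 1 → inner ℝ u e = 0 →
      γ ≤ D2 F u e e := by
  let E := EuclideanSpace ℝ (Fin n)
  let K : Set (E × E) := (Metric.sphere 0 1 ×ˢ Metric.sphere 0 1) ∩ {q | inner ℝ q.1 q.2 = 0}
  have hK : IsCompact K := by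
    refine ((isCompact_sphere _ _).prod (isCompact_sphere _ _)).inter_right ?_
    exact isClosed_eq (continuous_fst.inner continuous_snd) continuous_const
  have hcont : ContinuousOn (fun q : E × E => D2 F q.1 q.2 q.2) K := by
    intro q hq
    apply ContinuousAt.continuousWithinAt
    have hq0 : q.1 ≠ 0 := by
      intro h
      have := hq.1.1
      simp [h] at this
    have h1 : ContinuousAt (fderiv ℝ (fderiv ℝ F)) q.1 :=
      ((hF.cd1 hq0).fderiv_right (m := 0) (by norm_num)).continuousAt
    have h2 : ContinuousAt (fun q : E × E => fderiv ℝ (fderiv ℝ F) q.1) q :=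
      ContinuousAt.comp (f := Prod.fst) h1 continuousAt_fst
    exact (h2.clm_apply continuousAt_snd).clm_apply continuousAt_snd
  rcases K.eq_empty_or_nonempty with hE | hne
  · refine ⟨1, one_pos, fun u e hu he hue => ?_⟩
    have : ((u, e) : E × E) ∈ K := ⟨⟨by simpa using hu, by simpa using he⟩, hue⟩
    rw [hE] at this
    exact this.elim
  · obtain ⟨q, hq, hmin⟩ := hK.exists_isMinOn hne hcont
    refine ⟨D2 F q.1 q.2 q.2, hpos _ _ (by simpa using hq.1.1) (by simpa using hq.1.2) hq.2, ?_⟩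
    intro u e hu he hue
    have : ((u, e) : E × E) ∈ K := ⟨⟨by simpa using hu, by simpa using he⟩, hue⟩
    exact hmin this

end AnisoAux

/-- Proposition A.2, (a) ⇔ (e): a `C²`-anisotropy is elliptic iff along every segment on
a line avoiding the origin, `t ↦ Φ(x + t(y−x))` is twice differentiable with strictly
positive second derivative on `[0,1]`. -/
theorem elliptic_iff_strictly_convex_on_segments
    (n : ℕ) (hn : 2 ≤ n) (Φ : EuclideanSpace ℝ (Fin n) → ℝ)
    (hΦ : IsCAnisotropy 2 Φ) :
    IsElliptic Φ ↔
      ∀ x y : EuclideanSpace ℝ (Fin n), x ≠ y →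
        (∀ t : ℝ, x + t • (y - x) ≠ 0) →
        ∀ t ∈ Set.Icc (0 : ℝ) 1,
          DifferentiableAt ℝ (fun s : ℝ => Φ (x + s • (y - x))) t ∧
          DifferentiableAt ℝ (deriv fun s : ℝ => Φ (x + s • (y - x))) t ∧
          0 < deriv (deriv fun s : ℝ => Φ (x + s • (y - x))) t := by
  have hG : AnisoAux.Good Φ := by
    refine ⟨fun p hp => ?_, hΦ.1.2.2.1⟩
    exact hΦ.2.contDiffAt (isOpen_compl_singleton.mem_nhds hp)
  constructor
  · rintro ⟨γ, hγ, hc⟩ x y hxy h t _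
    have hv : y - x ≠ 0 := sub_ne_zero.2 hxy.symm
    refine ⟨(hG.line1 (h t)).differentiableAt, (hG.line2 h t).differentiableAt, ?_⟩
    rw [(hG.line2 h t).deriv]
    exact hG.forward hγ hc hv h t
  · intro H
    obtain ⟨γ, hγ, hmin⟩ := hG.exists_min (fun u e hu he hue => by
      have hl := AnisoAux.line_ne hu hue
      have he0 : e ≠ 0 := by rintro rfl; simp at he
      have := (H u (u + e) (by simpa using he0) (by simpa using hl) 0 (by simp)).2.2
      simp only [add_sub_cancel_left] at this
      rw [(hG.line2 hl 0).deriv] at this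
      simpa using this)
    obtain ⟨cl, cu, hcl, _, hb⟩ := hΦ.1.2.2.2
    refine ⟨min γ cl, lt_min hγ hcl, hG.backward hΦ.1.2.1 (fun x => ?_) ?_⟩
    · exact (mul_le_mul_of_nonneg_right (min_le_right _ _) (norm_nonneg x)).trans (hb x).1
    · intro u e hu he hue
      exact (min_le_left _ _).trans (hmin u e hu he hue)
end

section
/- Let n ≥ 2, let Γ ⊆ ℝⁿ be a nonempty compact set, let V ⊇ Γ be open, and let f : V → ℝ be twice continuously differentiable with Γ = f⁻¹({0}) and ∇f(x) ≠ 0 for every x ∈ Γ. Then there exists r > 0 such that the open tube U_r := {y ∈ ℝⁿ : dist(y, Γ) < r} is contained in V, and the signed distance function sd, defined on U_r by sd(y) := dist(y, Γ) if f(y) ≥ 0 and sd(y) := −dist(y, Γ) if f(y) < 0, is twice continuously differentiable on U_r; moreover ∇sd(x) = ∇f(x)/|∇f(x)| for every x ∈ Γ. (Regularity of the signed distance to a regular level set; Euclidean case of Proposition 2.1 (a)–(c).) -/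
open Filter Topology

section helpers
variable {E : Type*} [NormedAddCommGroup E] [InnerProductSpace ℝ E] [FiniteDimensional ℝ E]

lemma sdaux_inner_grad (f : E → ℝ) (x v : E) : inner ℝ (gradient f x) v = fderiv ℝ f x v := by
  simp [gradient]

lemma sdaux_grad_contDiffAt {f : E → ℝ} {x : E} (hf : ContDiffAt ℝ 2 f x) :
    ContDiffAt ℝ 1 (gradient f) x := by
  have h := hf.fderiv_right (m := 1) (by norm_num)
  unfold gradient
  exact ((InnerProductSpace.toDual ℝ E).symm.toContinuousLinearEquiv.contDiff.contDiffAt).comp x h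

lemma sdaux_local {f : E → ℝ} {x₀ : E} (hf : ContDiffAt ℝ 2 f x₀) (h0 : f x₀ = 0)
    (hg : gradient f x₀ ≠ 0) :
    ∃ (P : E → E) (t : E → ℝ), ContDiffAt ℝ 1 P x₀ ∧ ContDiffAt ℝ 1 t x₀ ∧ P x₀ = x₀ ∧ t x₀ = 0 ∧
      (∀ᶠ y in 𝓝 x₀, P y + t y • gradient f (P y) = y ∧ f (P y) = 0) ∧
      (∀ᶠ z in 𝓝 (x₀, (0:ℝ)), f z.1 = 0 →
        P (z.1 + z.2 • gradient f z.1) = z.1 ∧ t (z.1 + z.2 • gradient f z.1) = z.2) := by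
  have hgc := sdaux_grad_contDiffAt hf
  set g := gradient f with hgdef
  let G : E × ℝ → E × ℝ := fun z => (z.1 + z.2 • g z.1, f z.1)
  have hG : ContDiffAt ℝ 1 G (x₀, 0) := by
    have h1 : ContDiffAt ℝ 1 (fun z : E × ℝ => g z.1) (x₀, 0) :=
      ContDiffAt.comp (x₀, (0:ℝ)) (g := g) (f := Prod.fst) hgc contDiffAt_fst
    have h2 : ContDiffAt ℝ 1 (fun z : E × ℝ => f z.1) (x₀, 0) :=
      ContDiffAt.comp (x₀, (0:ℝ)) (g := f) (f := Prod.fst) (hf.of_le (by norm_num)) contDiffAt_fst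
    exact (contDiffAt_fst.add (contDiffAt_snd.smul h1)).prodMk h2
  let L : E × ℝ →L[ℝ] E × ℝ :=
    (ContinuousLinearMap.fst ℝ E ℝ + (ContinuousLinearMap.snd ℝ E ℝ).smulRight (g x₀)).prod
      ((fderiv ℝ f x₀).comp (ContinuousLinearMap.fst ℝ E ℝ))
  have hL : HasFDerivAt G L (x₀, 0) := by
    have hg1 : HasFDerivAt (fun z : E × ℝ => g z.1)
        ((fderiv ℝ g x₀).comp (ContinuousLinearMap.fst ℝ E ℝ)) (x₀, 0) :=
      HasFDerivAt.comp (x₀, (0:ℝ)) (g := g) (f := Prod.fst)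
        (hgc.differentiableAt (by norm_num)).hasFDerivAt hasFDerivAt_fst
    have hf1 : HasFDerivAt (fun z : E × ℝ => f z.1)
        ((fderiv ℝ f x₀).comp (ContinuousLinearMap.fst ℝ E ℝ)) (x₀, 0) :=
      HasFDerivAt.comp (x₀, (0:ℝ)) (g := f) (f := Prod.fst)
        (hf.differentiableAt (by norm_num)).hasFDerivAt hasFDerivAt_fst
    have := (hasFDerivAt_fst.add
      ((hasFDerivAt_snd (𝕜 := ℝ) (p := (x₀, (0:ℝ)))).smul hg1)).prodMk hf1
    refine this.congr_fderiv ?_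
    ext v <;> simp [L]
  have hinj : Function.Injective L := by
    rw [injective_iff_map_eq_zero]
    rintro ⟨v, s⟩ h
    have h1 : v + s • g x₀ = 0 := congrArg Prod.fst h
    have h2 : fderiv ℝ f x₀ v = 0 := congrArg Prod.snd h
    have hv : v = -(s • g x₀) := eq_neg_of_add_eq_zero_left h1
    rw [← sdaux_inner_grad, ← hgdef, hv, inner_neg_right, inner_smul_right,
      real_inner_self_eq_norm_sq] at h2
    have hs : s = 0 := by
      have : ‖g x₀‖ ≠ 0 := norm_ne_zero_iff.2 hg
      have h3 : s * ‖g x₀‖ ^ 2 = 0 := by linarith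
      rcases mul_eq_zero.1 h3 with h | h
      · exact h
      · exact absurd (pow_eq_zero_iff (by norm_num) |>.1 h) this
    simp [hv, hs]
  let Le : (E × ℝ) ≃L[ℝ] (E × ℝ) :=
    (LinearEquiv.ofInjectiveEndo (L : E × ℝ →ₗ[ℝ] E × ℝ) hinj).toContinuousLinearEquiv
  have hLe : (Le : E × ℝ →L[ℝ] E × ℝ) = L := by
    apply ContinuousLinearMap.ext
    intro v
    rfl
  have hL' : HasFDerivAt G (Le : E × ℝ →L[ℝ] E × ℝ) (x₀, 0) := by rw [hLe]; exact hL
  have hS : HasStrictFDerivAt G (Le : E × ℝ →L[ℝ] E × ℝ) (x₀, 0) :=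
    hG.hasStrictFDerivAt' hL' (by norm_num)
  have hinv := hG.to_localInverse hL' (by norm_num)
  have hleft := hS.eventually_left_inverse
  have hright := hS.eventually_right_inverse
  have himg := hS.localInverse_apply_image
  have hG0 : G (x₀, 0) = (x₀, 0) := by simp [G, h0]
  change ContDiffAt ℝ 1 (HasStrictFDerivAt.localInverse G Le (x₀, 0) hS) _ at hinv
  set H := HasStrictFDerivAt.localInverse G Le (x₀, 0) hS
  rw [hG0] at hinv hright himg
  have hcd : ContDiffAt ℝ 1 (fun y : E => H (y, 0)) x₀ :=
    ContDiffAt.comp x₀ (g := H) (f := fun y : E => (y, (0:ℝ))) hinv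
      (contDiffAt_id.prodMk contDiffAt_const)
  refine ⟨fun y => (H (y, 0)).1, fun y => (H (y, 0)).2, hcd.fst, hcd.snd, by simp [himg],
    by simp [himg], ?_, ?_⟩
  · have hc : Tendsto (fun y : E => (y, (0:ℝ))) (𝓝 x₀) (𝓝 (x₀, 0)) :=
      (Continuous.prodMk_left (0:ℝ)).tendsto x₀
    filter_upwards [hc.eventually hright] with y hy
    exact ⟨congrArg Prod.fst hy, congrArg Prod.snd hy⟩
  · filter_upwards [hleft] with z hz hfz
    have : G z = (z.1 + z.2 • g z.1, 0) := by simp [G, hfz]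
    rw [this] at hz
    exact ⟨congrArg Prod.fst hz, congrArg Prod.snd hz⟩

lemma sdaux_sigma {f : E → ℝ} {x₀ : E} (hf : ContDiffAt ℝ 2 f x₀)
    (hg : gradient f x₀ ≠ 0) {P : E → E} {t : E → ℝ} (hP : ContDiffAt ℝ 1 P x₀)
    (ht : ContDiffAt ℝ 1 t x₀) (hP0 : P x₀ = x₀)
    (hev : ∀ᶠ y in 𝓝 x₀, P y + t y • gradient f (P y) = y ∧ f (P y) = 0) :
    ContDiffAt ℝ 2 (fun y => t y * ‖gradient f (P y)‖) x₀ ∧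
      HasGradientAt (fun y => t y * ‖gradient f (P y)‖) (‖gradient f x₀‖⁻¹ • gradient f x₀) x₀ := by
  have hgc := sdaux_grad_contDiffAt hf
  set g := gradient f with hgdef
  have hgP : ContDiffAt ℝ 1 (fun y => g (P y)) x₀ :=
    ContDiffAt.comp x₀ (g := g) (f := P) (by rw [hP0]; exact hgc) hP
  have hPt : Tendsto P (𝓝 x₀) (𝓝 x₀) := by
    have := hP.continuousAt.tendsto
    rwa [hP0] at this
  have hgP0 : g (P x₀) ≠ 0 := by rw [hP0]; exact hg
  let N : E → E := fun y => ‖g (P y)‖⁻¹ • g (P y)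
  have hN : ContDiffAt ℝ 1 N x₀ :=
    ((hgP.norm ℝ hgP0).inv (norm_ne_zero_iff.2 hgP0)).smul hgP
  have hNe : ∀ᶠ y in 𝓝 x₀, g (P y) ≠ 0 := hgP.continuousAt.eventually_ne hgP0
  have key : ∀ᶠ y in 𝓝 x₀, HasFDerivAt (fun y => t y * ‖g (P y)‖) (innerSL ℝ (N y)) y := by
    filter_upwards [hev.eventually_nhds, hNe.eventually_nhds, hN.eventually (by simp),
      hP.eventually (by simp), hPt.eventually (hf.eventually (by simp))] with y h1 h2 h3 h4 h5
    have dN : HasFDerivAt N (fderiv ℝ N y) y := (h3.differentiableAt (by norm_num)).hasFDerivAt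
    have dP : HasFDerivAt P (fderiv ℝ P y) y := (h4.differentiableAt (by norm_num)).hasFDerivAt
    have df : HasFDerivAt f (fderiv ℝ f (P y)) (P y) :=
      (h5.differentiableAt (by norm_num)).hasFDerivAt
    have dfP : HasFDerivAt (fun z => f (P z)) ((fderiv ℝ f (P y)).comp (fderiv ℝ P y)) y :=
      df.comp y dP
    have e1 : (fun z => f (P z)) =ᶠ[𝓝 y] fun _ => (0:ℝ) := h1.mono fun z hz => hz.2
    have e1' : (fderiv ℝ f (P y)).comp (fderiv ℝ P y) = 0 :=
      dfP.unique ((hasFDerivAt_const (0:ℝ) y).congr_of_eventuallyEq e1)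
    have dNN := dN.inner ℝ dN
    have e2 : (fun z => inner ℝ (N z) (N z)) =ᶠ[𝓝 y] fun _ => (1:ℝ) := by
      filter_upwards [h2] with z hz
      simp [N, real_inner_self_eq_norm_sq, norm_smul, norm_ne_zero_iff.2 hz]
    have e2' := dNN.unique ((hasFDerivAt_const (1:ℝ) y).congr_of_eventuallyEq e2)
    have ds := ((hasFDerivAt_id y).sub dP).inner ℝ dN
    have e3 : (fun y => t y * ‖g (P y)‖) =ᶠ[𝓝 y] fun z => inner ℝ (id z - P z) (N z) := by
      filter_upwards [h1, h2] with z hz hz2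
      have : id z - P z = t z • g (P z) := by
        rw [id, sub_eq_iff_eq_add']; exact hz.1.symm
      rw [this]
      have := norm_ne_zero_iff.2 hz2
      simp only [N, inner_smul_left, inner_smul_right, real_inner_self_eq_norm_sq]
      simp
      field_simp
    refine (ds.congr_of_eventuallyEq e3).congr_fderiv ?_
    ext v
    have a1 : inner ℝ (fderiv ℝ P y v) (N y) = 0 := by
      have := DFunLike.congr_fun e1' v
      simp only [ContinuousLinearMap.comp_apply, _root_.zero_apply] at this
      rw [← sdaux_inner_grad, ← hgdef] at this
      simp only [N]
      rw [inner_smul_right, real_inner_comm, this, mul_zero]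
    have a2 : inner ℝ (N y) (fderiv ℝ N y v) = 0 := by
      have := DFunLike.congr_fun e2' v
      simp [real_inner_comm] at this
      first
        | exact this
        | (rw [real_inner_comm]; exact this)
    have a3 : id y - P y = (t y * ‖g (P y)‖) • N y := by
      have hz := h1.self_of_nhds.1
      have h6 := norm_ne_zero_iff.2 h2.self_of_nhds
      simp only [N]
      rw [id, sub_eq_iff_eq_add', smul_smul, mul_assoc, mul_inv_cancel₀ h6, mul_one]
      exact hz.symm
    simp only [ContinuousLinearMap.comp_apply, ContinuousLinearMap.prod_apply,
      fderivInnerCLM_apply, _root_.sub_apply, ContinuousLinearMap.id_apply,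
      innerSL_apply_apply, inner_sub_left, a1]
    rw [Pi.sub_apply, a3, inner_smul_left, a2, real_inner_comm]
    simp
  refine ⟨?_, ?_⟩
  · have := (contDiffAt_succ_iff_hasFDerivAt (𝕜 := ℝ) (n := 1)
      (f := fun y => t y * ‖g (P y)‖) (x := x₀)).2
      ⟨fun y => innerSL ℝ (N y), ⟨_, key, fun x hx => hx⟩, ?_⟩
    · exact_mod_cast this
    · exact (innerSL ℝ (E := E)).contDiff.contDiffAt.comp x₀ (by exact_mod_cast hN)
  · have := key.self_of_nhds
    rw [hasGradientAt_iff_hasFDerivAt]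
    refine this.congr_fderiv ?_
    ext v
    simp [N, hP0]

lemma sdaux_lagrange {f : E → ℝ} {y q : E} (hf : ContDiffAt ℝ 2 f q) (hg : gradient f q ≠ 0)
    (h0 : f q = 0) (hmin : ∀ᶠ x in 𝓝 q, f x = 0 → dist y q ≤ dist y x) :
    ∃ s : ℝ, y = q + s • gradient f q := by
  have hfs : HasStrictFDerivAt f (fderiv ℝ f q) q :=
    hf.hasStrictFDerivAt (by norm_num)
  have hφ : HasStrictFDerivAt (fun x => ‖x - y‖ ^ 2) (2 • innerSL ℝ (q - y)) q := by
    have := (hasStrictFDerivAt_norm_sq (q - y)).comp q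
      ((hasStrictFDerivAt_id q).sub (hasStrictFDerivAt_const y q))
    refine this.congr_fderiv ?_
    ext v; simp
  have hext : IsLocalExtrOn (fun x => ‖x - y‖ ^ 2) {x | f x = f q} q := by
    left
    change ∀ᶠ x in 𝓝[{x | f x = f q}] q, ‖q - y‖ ^ 2 ≤ ‖x - y‖ ^ 2
    rw [eventually_nhdsWithin_iff]
    filter_upwards [hmin] with x hx hx2
    have := hx (by rw [hx2, h0])
    rw [dist_comm, dist_comm y, dist_eq_norm, dist_eq_norm] at this
    gcongr
  obtain ⟨a, b, hab, h⟩ := hext.exists_multipliers_of_hasStrictFDerivAt_1d hfs hφ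
  have hv : a • gradient f q + (2 * b) • (q - y) = 0 := by
    apply ext_inner_right ℝ
    intro v
    have := DFunLike.congr_fun h v
    simp at this
    rw [inner_add_left, inner_smul_left, inner_smul_left, sdaux_inner_grad, inner_sub_left]
    simp
    rw [← this]; ring
  have hb : b ≠ 0 := by
    rintro rfl
    simp [hg] at hv
    exact hab (by simp [hv])
  refine ⟨a / (2 * b), ?_⟩
  have : (2 * b)⁻¹ • (a • gradient f q + (2 * b) • (q - y)) = 0 := by rw [hv, smul_zero]
  rw [smul_add, smul_smul, smul_smul, inv_mul_cancel₀ (by simpa using hb), one_smul] at this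
  rw [div_eq_inv_mul]
  rw [← sub_eq_zero, ← neg_eq_zero, ← this]
  abel

lemma sdaux_eq {f : E → ℝ} {Γ V : Set E} (hΓne : Γ.Nonempty) (hΓc : IsCompact Γ) (hV : IsOpen V)
    (hf : ContDiffOn ℝ 2 f V) (hΓ : Γ = {x ∈ V | f x = 0})
    (hgrad : ∀ x ∈ Γ, gradient f x ≠ 0) {x₀ : E} (hx₀ : x₀ ∈ Γ)
    {P : E → E} {t : E → ℝ} (hP : ContDiffAt ℝ 1 P x₀) (hP0 : P x₀ = x₀)
    (hinv : ∀ᶠ z in 𝓝 (x₀, (0:ℝ)), f z.1 = 0 →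
        P (z.1 + z.2 • gradient f z.1) = z.1 ∧ t (z.1 + z.2 • gradient f z.1) = z.2) :
    (fun y => if 0 ≤ f y then Metric.infDist y Γ else -Metric.infDist y Γ) =ᶠ[𝓝 x₀]
      fun y => t y * ‖gradient f (P y)‖ := by
  have hmem : ∀ x ∈ Γ, x ∈ V ∧ f x = 0 := fun x hx => by rw [hΓ] at hx; exact hx
  have hfat : ∀ x ∈ Γ, ContDiffAt ℝ 2 f x := fun x hx =>
    hf.contDiffAt (hV.mem_nhds (hmem x hx).1)
  have hgc := (sdaux_grad_contDiffAt (hfat x₀ hx₀)).continuousAt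
  have hin : ∀ v, fderiv ℝ f x₀ v = inner ℝ (gradient f x₀) v := fun v =>
    (sdaux_inner_grad f x₀ v).symm
  have hlag : ∀ y, ∀ q ∈ Γ, Metric.infDist y Γ = dist y q → ∃ s : ℝ, y = q + s • gradient f q := by
    intro y q hq hd
    refine sdaux_lagrange (hfat q hq) (hgrad q hq) (hmem q hq).2 ?_
    filter_upwards [hV.mem_nhds (hmem q hq).1] with x hx hfx
    rw [← hd]
    exact Metric.infDist_le_dist_of_mem (by rw [hΓ]; exact ⟨hx, hfx⟩)
  set g := gradient f with hgdef
  have hg0 : 0 < ‖g x₀‖ := norm_pos_iff.2 (hgrad x₀ hx₀)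
  set c := ‖g x₀‖ / 2 with hc
  have hcpos : 0 < c := by positivity
  have hPt : Tendsto P (𝓝 x₀) (𝓝 x₀) := by
    have := hP.continuousAt.tendsto
    rwa [hP0] at this
  -- lower bound for the gradient
  have hglow : ∀ᶠ q in 𝓝 x₀, c < ‖g q‖ :=
    hgc.norm.eventually (lt_mem_nhds (by rw [hc]; linarith))
  have hgin : ∀ᶠ q in 𝓝 x₀, c * ‖g q‖ < inner ℝ (g x₀) (g q) := by
    have hcont : ContinuousAt (fun q => inner ℝ (g x₀) (g q) - c * ‖g q‖) x₀ :=
      (continuousAt_const.inner hgc).sub (continuousAt_const.mul hgc.norm)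
    have h0 : 0 < inner ℝ (g x₀) (g x₀) - c * ‖g x₀‖ := by
      rw [real_inner_self_eq_norm_sq, hc]; nlinarith
    filter_upwards [hcont.eventually (lt_mem_nhds h0)] with q hq
    linarith
  have hstrict : ∀ᶠ y in 𝓝 x₀,
      ‖f y - f (P y) - fderiv ℝ f x₀ (y - P y)‖ ≤ c * ‖y - P y‖ := by
    have hs : HasStrictFDerivAt f (fderiv ℝ f x₀) x₀ :=
      (hfat x₀ hx₀).hasStrictFDerivAt (by norm_num)
    have h1 := hs.isLittleO.bound hcpos
    have h2 : Tendsto (fun y => (y, P y)) (𝓝 x₀) (𝓝 (x₀, x₀)) := tendsto_id.prodMk_nhds hPt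
    exact h2.eventually h1
  -- nearest points are given by `P`, `t`
  have hnear : ∀ᶠ y in 𝓝 x₀, P y ∈ Γ ∧ Metric.infDist y Γ = dist y (P y) ∧
      y - P y = t y • g (P y) := by
    obtain ⟨ε, hε, hball⟩ := Metric.eventually_nhds_iff.1 hinv
    obtain ⟨ε', hε', hball'⟩ := Metric.eventually_nhds_iff.1 hglow
    have hδ : 0 < min (min (ε / 2) (ε' / 2)) (c * ε) := by positivity
    filter_upwards [Metric.ball_mem_nhds x₀ hδ] with y hy
    rw [Metric.mem_ball, lt_min_iff, lt_min_iff] at hy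
    obtain ⟨⟨hy1, hy2⟩, hy3⟩ := hy
    obtain ⟨q, hq, hqd⟩ := hΓc.exists_infDist_eq_dist hΓne y
    obtain ⟨s, hs⟩ := hlag y q hq hqd
    have hle : dist y q ≤ dist y x₀ := hqd ▸ Metric.infDist_le_dist_of_mem hx₀
    have hqx : dist q x₀ ≤ 2 * dist y x₀ := by
      have := dist_triangle_left q x₀ y
      linarith
    have hgq := hball' (y := q) (by linarith)
    have hsn : |s| * ‖g q‖ = dist y q := by
      rw [dist_eq_norm]
      conv_rhs => rw [hs]
      rw [add_sub_cancel_left, norm_smul, Real.norm_eq_abs]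
    have hsε : |s| < ε := by
      by_contra hcon
      push Not at hcon
      have : c * ε ≤ |s| * ‖g q‖ := by
        rw [mul_comm]
        exact mul_le_mul hcon hgq.le hcpos.le (abs_nonneg s)
      linarith
    have hz := hball (y := (q, s)) (by
      rw [Prod.dist_eq, max_lt_iff]
      refine ⟨by simp only; linarith, by simpa using hsε⟩) (hmem q hq).2
    simp only at hz
    rw [← hs] at hz
    rw [hz.1, hz.2]
    exact ⟨hq, hqd, by rw [sub_eq_iff_eq_add']; exact hs⟩
  filter_upwards [hnear, hstrict, hPt.eventually hgin] with y ⟨h1, h2, h3⟩ h4 h5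
  rw [(hmem _ h1).2, hin, h3, inner_smul_right, norm_smul, Real.norm_eq_abs, Real.norm_eq_abs,
    abs_le] at h4
  have hd : Metric.infDist y Γ = |t y| * ‖g (P y)‖ := by
    rw [h2, dist_eq_norm, h3, norm_smul, Real.norm_eq_abs]
  rw [hd]
  rcases lt_trichotomy (t y) 0 with ht | ht | ht
  · rw [abs_of_neg ht] at h4 ⊢
    have : f y < 0 := by nlinarith [mul_lt_mul_of_neg_left h5 ht]
    rw [if_neg (not_le.2 this)]
    ring
  · simp [ht]
  · rw [abs_of_pos ht] at h4 ⊢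
    have : 0 < f y := by nlinarith [mul_lt_mul_of_pos_left h5 ht]
    rw [if_pos this.le]

end helpers

/-- Regularity of the signed distance to a compact regular level set (Euclidean case of
Proposition 2.1 (a)–(c)): if `Γ = {f = 0} ⊆ V` is compact with `∇f ≠ 0` on `Γ` and `f`
is `C²` on the open set `V`, then on a small open tube around `Γ` the signed distance
function is `C²`, and its gradient on `Γ` is the unit normal `∇f/|∇f|`. -/
theorem signedDist_contDiff_of_regular_level_set
    (n : ℕ) (hn : 2 ≤ n) (Γ V : Set (EuclideanSpace ℝ (Fin n)))
    (hΓne : Γ.Nonempty) (hΓc : IsCompact Γ) (hV : IsOpen V) (hΓV : Γ ⊆ V)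
    (f : EuclideanSpace ℝ (Fin n) → ℝ) (hf : ContDiffOn ℝ 2 f V)
    (hΓ : Γ = {x ∈ V | f x = 0})
    (hgrad : ∀ x ∈ Γ, fderiv ℝ f x ≠ 0) :
    ∃ r : ℝ, 0 < r ∧
      {y : EuclideanSpace ℝ (Fin n) | Metric.infDist y Γ < r} ⊆ V ∧
      ContDiffOn ℝ 2
        (fun y => if 0 ≤ f y then Metric.infDist y Γ else -Metric.infDist y Γ)
        {y : EuclideanSpace ℝ (Fin n) | Metric.infDist y Γ < r} ∧
      ∀ x ∈ Γ,
        gradient (fun y => if 0 ≤ f y then Metric.infDist y Γ else -Metric.infDist y Γ) x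
          = ‖gradient f x‖⁻¹ • gradient f x := by
  have hgrad' : ∀ x ∈ Γ, gradient f x ≠ 0 := by
    intro x hx h
    apply hgrad x hx
    ext v
    rw [← sdaux_inner_grad, h]
    simp
  have main : ∀ x ∈ Γ,
      ContDiffAt ℝ 2
        (fun y => if 0 ≤ f y then Metric.infDist y Γ else -Metric.infDist y Γ) x ∧
      HasGradientAt (fun y => if 0 ≤ f y then Metric.infDist y Γ else -Metric.infDist y Γ)
        (‖gradient f x‖⁻¹ • gradient f x) x := by
    intro x hx
    have hfx : ContDiffAt ℝ 2 f x := hf.contDiffAt (hV.mem_nhds (hΓV hx))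
    have h0 : f x = 0 := by
      rw [hΓ] at hx
      exact hx.2
    obtain ⟨P, t, hP, ht, hP0, -, hev, hinv⟩ := sdaux_local hfx h0 (hgrad' x hx)
    have heq := sdaux_eq hΓne hΓc hV hf hΓ hgrad' hx hP hP0 hinv
    obtain ⟨hc, hd⟩ := sdaux_sigma hfx (hgrad' x hx) hP ht hP0 hev
    exact ⟨hc.congr_of_eventuallyEq heq, hd.congr_of_eventuallyEq heq⟩
  set sd : EuclideanSpace ℝ (Fin n) → ℝ :=
    fun y => if 0 ≤ f y then Metric.infDist y Γ else -Metric.infDist y Γ with hsd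
  have hopen : IsOpen {x | ContDiffAt ℝ 2 sd x} := by
    rw [isOpen_iff_mem_nhds]
    intro x hx
    exact ContDiffAt.eventually hx (by simp)
  obtain ⟨r, hr, hsub⟩ := hΓc.exists_thickening_subset_open (hV.inter hopen)
    (fun x hx => ⟨hΓV hx, (main x hx).1⟩)
  have hsub' : ∀ y, Metric.infDist y Γ < r → y ∈ V ∧ ContDiffAt ℝ 2 sd y := fun y hy =>
    hsub ((Metric.mem_thickening_iff_infDist_lt hΓne).2 hy)
  exact ⟨r, hr, fun y hy => (hsub' y hy).1, fun y hy => (hsub' y hy).2.contDiffWithinAt,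
    fun x hx => (main x hx).2.gradient⟩
end
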